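/- Assume the generalized-LFT setting: with W_1 = (M − P_1 H)^{-1} P_1 G and W_2 = (N − P_2 S)^{-1} P_2 K, define E = E_0 + F_1 W_1, A_xx = A_xx^0 + F_2 W_1, C_x = C_x^0 + F_3 W_1, A_zx = A_zx^0 + F_4 W_1, A_xv = A_xv^0 + J_1 W_2, C_v = C_v^0 + J_2 W_2, A_zv = A_zv^0 + J_3 W_2. Then for every complex λ, the matrix Ξ^[o](λ) = [[λE − A_xx, −A_xv],[−C_x, −C_v],[−Φ A_zx, I_{M_v} − Φ A_zv]] has full column rank if and only if the matrix Ξ_p^[o](λ) = [[λE_0 − A_xx^0, λF_1 − F_2, −A_xv^0, −J_1],[−C_x^0, −F_3, −C_v^0, −J_2],[−P_1 G, M − P_1 H, 0, 0],[0, 0, −P_2 K, N − P_2 S],[−Φ A_zx^0, −Φ F_4, I_{M_v} − Φ A_zv^0, −Φ J_3]] has full column rank. -/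

import Mathlib

/-!
The rows of `Ξₚ⁽ᵒ⁾(λ)` that come from the two feedback loops carry the invertible diagonal block
`D = diag(M - P₁H, N - P₂S)`. Up to a permutation of block rows and block columns, `Ξ⁽ᵒ⁾(λ)` is the
Schur complement of `D` in `Ξₚ⁽ᵒ⁾(λ)`, so the two ranks differ by exactly the size of `D`, which is
also the difference of the numbers of columns.
-/

open Matrix

section SchurComplement

variable {l m n R : Type*} [Fintype m] [Fintype n] [DecidableEq n]

theorem ker_mulVecLin_fromBlocks_of_isUnit₂₂ [CommRing R] [DecidableEq m] (A : Matrix l m R)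
    (B : Matrix l n R) (C : Matrix n m R) {D : Matrix n n R} (hD : IsUnit D) :
    LinearMap.ker (fromBlocks A B C D).mulVecLin =
      (LinearMap.ker (A - B * D⁻¹ * C).mulVecLin).map
        (fromRows (1 : Matrix m m R) (-(D⁻¹ * C))).mulVecLin := by
  have hdet : IsUnit D.det := (isUnit_iff_isUnit_det D).mp hD
  have solve (x : m → R) (w : n → R) : C *ᵥ x + D *ᵥ w = 0 ↔ w = -(D⁻¹ * C) *ᵥ x := by
    rw [← (mulVec_injective_of_isUnit hD).eq_iff (a := w), mulVec_mulVec, Matrix.mul_neg,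
      mul_nonsing_inv_cancel_left _ _ hdet, neg_mulVec, eq_neg_iff_add_eq_zero, add_comm]
  ext u
  obtain ⟨x, w, rfl⟩ : ∃ x w, u = Sum.elim x w := ⟨_, _, (Sum.elim_comp_inl_inr u).symm⟩
  have schur : (A - B * D⁻¹ * C) *ᵥ x = A *ᵥ x + B *ᵥ (-(D⁻¹ * C) *ᵥ x) := by
    rw [mulVec_mulVec, ← add_mulVec, Matrix.mul_neg, sub_eq_add_neg, Matrix.mul_assoc]
  simp only [LinearMap.mem_ker, Submodule.mem_map, mulVecLin_apply, fromBlocks_mulVec,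
    fromRows_mulVec, one_mulVec, Sum.elim_comp_inl, Sum.elim_comp_inr, ← Sum.elim_zero_zero,
    Sum.elim_eq_iff, solve]
  constructor
  · rintro ⟨h, rfl⟩
    exact ⟨x, schur.trans h, rfl, rfl⟩
  · rintro ⟨_, h, rfl, rfl⟩
    exact ⟨schur.symm.trans h, rfl⟩

theorem rank_fromBlocks_of_isUnit₂₂ [Field R] (A : Matrix l m R) (B : Matrix l n R)
    (C : Matrix n m R) {D : Matrix n n R} (hD : IsUnit D) :
    (fromBlocks A B C D).rank = (A - B * D⁻¹ * C).rank + Fintype.card n := by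
  classical
  have injective_graph :
      Function.Injective (fromRows (1 : Matrix m m R) (-(D⁻¹ * C))).mulVecLin := fun x x' h => by
    simpa [fromRows_mulVec, Sum.elim_eq_iff] using congrArg (· ∘ Sum.inl) h
  have finrank_ker_eq : Module.finrank R (LinearMap.ker (fromBlocks A B C D).mulVecLin) =
      Module.finrank R (LinearMap.ker (A - B * D⁻¹ * C).mulVecLin) := by
    rw [ker_mulVecLin_fromBlocks_of_isUnit₂₂ A B C hD]
    exact (Submodule.equivMapOfInjective _ injective_graph _).finrank_eq.symm
  have nullity_block := (fromBlocks A B C D).mulVecLin.finrank_range_add_finrank_ker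
  have nullity_schur := (A - B * D⁻¹ * C).mulVecLin.finrank_range_add_finrank_ker
  rw [Module.finrank_fintype_fun_eq_card] at nullity_block nullity_schur
  rw [Fintype.card_sum] at nullity_block
  unfold Matrix.rank
  omega

end SchurComplement

variable {𝕜 x v z y q₁ q₂ r₁ r₂ : Type*}

/-- The coefficient matrices of a linear descriptor system with state `x`, measured output `y`, and
internal input `v` and internal output `z`, through which it is connected to other systems. -/
structure DescriptorSystem (𝕜 x v z y : Type*) where
  E : Matrix x x 𝕜
  Axx : Matrix x x 𝕜
  Axv : Matrix x v 𝕜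
  Azx : Matrix z x 𝕜
  Azv : Matrix z v 𝕜
  Cx : Matrix y x 𝕜
  Cv : Matrix y v 𝕜

/-- The matrix `Ξ⁽ᵒ⁾(λ)` of a descriptor system whose internal signals are connected by
`v = Φ z`. -/
def DescriptorSystem.observabilityPencil [Ring 𝕜] [Fintype z] [DecidableEq v]
    (sys : DescriptorSystem 𝕜 x v z y) (Φ : Matrix v z 𝕜) (lam : 𝕜) :
    Matrix ((x ⊕ y) ⊕ v) (x ⊕ v) 𝕜 :=
  fromRows (fromBlocks (lam • sys.E - sys.Axx) (-sys.Axv) (-sys.Cx) (-sys.Cv))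
    (fromCols (-(Φ * sys.Azx)) (1 - Φ * sys.Azv))

/-- A generalized linear fractional transformation: a nominal descriptor system, together with the
data of the feedback loop `(F, P₁, G, H, M)` through which parameters enter the columns acting on
`x`, and of the loop `(J, P₂, K, S, N)` through which they enter the columns acting on `v`. -/
structure GeneralizedLFT (𝕜 x v z y q₁ q₂ r₁ r₂ : Type*) where
  nominal : DescriptorSystem 𝕜 x v z y
  F₁ : Matrix x q₁ 𝕜
  F₂ : Matrix x q₁ 𝕜
  F₃ : Matrix y q₁ 𝕜
  F₄ : Matrix z q₁ 𝕜
  J₁ : Matrix x q₂ 𝕜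
  J₂ : Matrix y q₂ 𝕜
  J₃ : Matrix z q₂ 𝕜
  P₁ : Matrix q₁ r₁ 𝕜
  G : Matrix r₁ x 𝕜
  H : Matrix r₁ q₁ 𝕜
  M : Matrix q₁ q₁ 𝕜
  P₂ : Matrix q₂ r₂ 𝕜
  K : Matrix r₂ v 𝕜
  S : Matrix r₂ q₂ 𝕜
  N : Matrix q₂ q₂ 𝕜

namespace GeneralizedLFT

section AffinePencil

variable [Ring 𝕜] [Fintype z] [Fintype r₁] [Fintype r₂]

/-- The matrix `Ξₚ⁽ᵒ⁾(λ)`, which is affine in the parameter matrices `P₁` and `P₂`. -/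
def affinePencil [DecidableEq v] (L : GeneralizedLFT 𝕜 x v z y q₁ q₂ r₁ r₂) (Φ : Matrix v z 𝕜)
    (lam : 𝕜) : Matrix (x ⊕ y ⊕ q₁ ⊕ q₂ ⊕ v) ((x ⊕ q₁) ⊕ v ⊕ q₂) 𝕜 :=
  fromRows
    (fromCols (fromCols (lam • L.nominal.E - L.nominal.Axx) (lam • L.F₁ - L.F₂))
      (fromCols (-L.nominal.Axv) (-L.J₁)))
  (fromRows
    (fromCols (fromCols (-L.nominal.Cx) (-L.F₃)) (fromCols (-L.nominal.Cv) (-L.J₂)))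
  (fromRows
    (fromCols (fromCols (-(L.P₁ * L.G)) (L.M - L.P₁ * L.H)) (fromCols 0 0))
  (fromRows
    (fromCols (fromCols 0 0) (fromCols (-(L.P₂ * L.K)) (L.N - L.P₂ * L.S)))
    (fromCols (fromCols (-(Φ * L.nominal.Azx)) (-(Φ * L.F₄)))
      (fromCols (1 - Φ * L.nominal.Azv) (-(Φ * L.J₃)))))))

/-- The part of `Ξₚ⁽ᵒ⁾(λ)` through which the loop variables enter the equations of the nominal
system, with rows ordered as in `Ξ⁽ᵒ⁾(λ)`. -/
def couplingPencil (L : GeneralizedLFT 𝕜 x v z y q₁ q₂ r₁ r₂) (Φ : Matrix v z 𝕜) (lam : 𝕜) :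
    Matrix ((x ⊕ y) ⊕ v) (q₁ ⊕ q₂) 𝕜 :=
  fromRows (fromBlocks (lam • L.F₁ - L.F₂) (-L.J₁) (-L.F₃) (-L.J₂))
    (fromCols (-(Φ * L.F₄)) (-(Φ * L.J₃)))

/-- The reordering of block rows that moves the loop equations of `Ξₚ⁽ᵒ⁾(λ)` to the bottom. -/
def rowEquiv (x v y q₁ q₂ : Type*) : ((x ⊕ y) ⊕ v) ⊕ q₁ ⊕ q₂ ≃ x ⊕ y ⊕ q₁ ⊕ q₂ ⊕ v :=
  (Equiv.sumAssoc (x ⊕ y) v (q₁ ⊕ q₂)).trans <| (Equiv.sumAssoc x y (v ⊕ q₁ ⊕ q₂)).trans <|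
    (Equiv.refl x).sumCongr <| (Equiv.refl y).sumCongr <|
      (Equiv.sumComm v (q₁ ⊕ q₂)).trans (Equiv.sumAssoc q₁ q₂ v)

theorem affinePencil_submatrix [DecidableEq v] (L : GeneralizedLFT 𝕜 x v z y q₁ q₂ r₁ r₂)
    (Φ : Matrix v z 𝕜) (lam : 𝕜) :
    (L.affinePencil Φ lam).submatrix (rowEquiv x v y q₁ q₂) (Equiv.sumSumSumComm x v q₁ q₂) =
      fromBlocks (L.nominal.observabilityPencil Φ lam) (L.couplingPencil Φ lam)
        (fromBlocks (-(L.P₁ * L.G)) 0 0 (-(L.P₂ * L.K)))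
        (fromBlocks (L.M - L.P₁ * L.H) 0 0 (L.N - L.P₂ * L.S)) := by
  ext (((i | i) | i) | (i | i)) ((j | j) | (j | j)) <;> rfl

end AffinePencil

section System

variable [CommRing 𝕜] [Fintype z] [Fintype q₁] [Fintype q₂] [Fintype r₁] [Fintype r₂]
  [DecidableEq q₁] [DecidableEq q₂]

/-- The gain from `x` to the variable of the first loop; meaningful if `M - P₁H` is invertible. -/
noncomputable def W₁ (L : GeneralizedLFT 𝕜 x v z y q₁ q₂ r₁ r₂) : Matrix q₁ x 𝕜 :=
  (L.M - L.P₁ * L.H)⁻¹ * (L.P₁ * L.G)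

/-- The gain from `v` to the variable of the second loop; meaningful if `N - P₂S` is invertible. -/
noncomputable def W₂ (L : GeneralizedLFT 𝕜 x v z y q₁ q₂ r₁ r₂) : Matrix q₂ v 𝕜 :=
  (L.N - L.P₂ * L.S)⁻¹ * (L.P₂ * L.K)

/-- The descriptor system obtained by eliminating the variables of both feedback loops. -/
noncomputable def system (L : GeneralizedLFT 𝕜 x v z y q₁ q₂ r₁ r₂) :
    DescriptorSystem 𝕜 x v z y where
  E := L.nominal.E + L.F₁ * L.W₁
  Axx := L.nominal.Axx + L.F₂ * L.W₁
  Axv := L.nominal.Axv + L.J₁ * L.W₂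
  Azx := L.nominal.Azx + L.F₄ * L.W₁
  Azv := L.nominal.Azv + L.J₃ * L.W₂
  Cx := L.nominal.Cx + L.F₃ * L.W₁
  Cv := L.nominal.Cv + L.J₂ * L.W₂

theorem observabilityPencil_system [DecidableEq v] (L : GeneralizedLFT 𝕜 x v z y q₁ q₂ r₁ r₂)
    (Φ : Matrix v z 𝕜) (lam : 𝕜) :
    L.system.observabilityPencil Φ lam =
      L.nominal.observabilityPencil Φ lam + L.couplingPencil Φ lam * fromBlocks L.W₁ 0 0 L.W₂ := by
  have coupling_mul_gain : L.couplingPencil Φ lam * fromBlocks L.W₁ 0 0 L.W₂ =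
      fromRows
        (fromBlocks (lam • (L.F₁ * L.W₁) - L.F₂ * L.W₁) (-(L.J₁ * L.W₂))
          (-(L.F₃ * L.W₁)) (-(L.J₂ * L.W₂)))
        (fromCols (-(Φ * (L.F₄ * L.W₁))) (-(Φ * (L.J₃ * L.W₂)))) := by
    simp [couplingPencil, fromRows_mul, fromBlocks_multiply, fromCols_mul_fromBlocks,
      Matrix.sub_mul, Matrix.mul_assoc]
  rw [coupling_mul_gain]
  ext ((i | i) | i) (j | j) <;>
    simp only [DescriptorSystem.observabilityPencil, system, fromRows_apply_inl,
      fromRows_apply_inr, fromBlocks_apply₁₁, fromBlocks_apply₁₂, fromBlocks_apply₂₁,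
      fromBlocks_apply₂₂, fromCols_apply_inl, fromCols_apply_inr, Matrix.mul_add, smul_add,
      Matrix.add_apply, Matrix.sub_apply, Matrix.neg_apply] <;>
    ring

theorem observabilityPencil_system_eq_schurComplement [DecidableEq v]
    (L : GeneralizedLFT 𝕜 x v z y q₁ q₂ r₁ r₂) (hwp₁ : IsUnit (L.M - L.P₁ * L.H))
    (hwp₂ : IsUnit (L.N - L.P₂ * L.S)) (Φ : Matrix v z 𝕜) (lam : 𝕜) :
    L.system.observabilityPencil Φ lam = L.nominal.observabilityPencil Φ lam -
      L.couplingPencil Φ lam * (fromBlocks (L.M - L.P₁ * L.H) 0 0 (L.N - L.P₂ * L.S))⁻¹ *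
        fromBlocks (-(L.P₁ * L.G)) 0 0 (-(L.P₂ * L.K)) := by
  have loop_gain : (fromBlocks (L.M - L.P₁ * L.H) 0 0 (L.N - L.P₂ * L.S))⁻¹ *
      fromBlocks (-(L.P₁ * L.G)) 0 0 (-(L.P₂ * L.K)) = -fromBlocks L.W₁ 0 0 L.W₂ := by
    rw [inv_fromBlocks_zero₂₁_of_isUnit_iff _ _ _ (iff_of_true hwp₁ hwp₂)]
    simp [fromBlocks_multiply, fromBlocks_neg, W₁, W₂]
  rw [observabilityPencil_system, Matrix.mul_assoc, loop_gain, Matrix.mul_neg, sub_neg_eq_add]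

end System

end GeneralizedLFT

theorem lft_observability_pencil_iff_general [Field 𝕜] [Fintype x] [Fintype v] [Fintype z]
    [Fintype q₁] [Fintype q₂] [Fintype r₁] [Fintype r₂] [DecidableEq v]
    [DecidableEq q₁] [DecidableEq q₂] (L : GeneralizedLFT 𝕜 x v z y q₁ q₂ r₁ r₂)
    (hwp₁ : IsUnit (L.M - L.P₁ * L.H)) (hwp₂ : IsUnit (L.N - L.P₂ * L.S)) (Φ : Matrix v z 𝕜)
    (lam : 𝕜) :
    (L.affinePencil Φ lam).rank =
      (L.system.observabilityPencil Φ lam).rank + (Fintype.card q₁ + Fintype.card q₂) := by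
  have isUnit_loops : IsUnit (fromBlocks (L.M - L.P₁ * L.H) 0 0 (L.N - L.P₂ * L.S)) :=
    isUnit_fromBlocks_zero₂₁.mpr ⟨hwp₁, hwp₂⟩
  rw [← rank_submatrix _ (GeneralizedLFT.rowEquiv x v y q₁ q₂) (Equiv.sumSumSumComm x v q₁ q₂),
    L.affinePencil_submatrix, rank_fromBlocks_of_isUnit₂₂ _ _ _ isUnit_loops, Fintype.card_sum,
    L.observabilityPencil_system_eq_schurComplement hwp₁ hwp₂]

/-- **Theorem 3 (generalized LFT).** With `W₁ = (M − P₁H)⁻¹ P₁G`, `W₂ = (N − P₂S)⁻¹ P₂K`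
and system matrices given by the generalized LFTs `E = E₀ + F₁W₁`, `Axx = Axx₀ + F₂W₁`,
`Cx = Cx₀ + F₃W₁`, `Azx = Azx₀ + F₄W₁`, `Axv = Axv₀ + J₁W₂`, `Cv = Cv₀ + J₂W₂`,
`Azv = Azv₀ + J₃W₂`, for every complex `λ` the matrix `Ξ⁽ᵒ⁾(λ)` has full column rank iff
the parameter-affine matrix `Ξₚ⁽ᵒ⁾(λ)` has full column rank. -/
theorem lft_observability_pencil_iff
    (Mx Mv Mz My q₁ q₂ r₁ r₂ : ℕ)
    (E₀ Axx₀ : Matrix (Fin Mx) (Fin Mx) ℂ)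
    (Axv₀ : Matrix (Fin Mx) (Fin Mv) ℂ)
    (Azx₀ : Matrix (Fin Mz) (Fin Mx) ℂ)
    (Azv₀ : Matrix (Fin Mz) (Fin Mv) ℂ)
    (Cx₀ : Matrix (Fin My) (Fin Mx) ℂ)
    (Cv₀ : Matrix (Fin My) (Fin Mv) ℂ)
    (Φ : Matrix (Fin Mv) (Fin Mz) ℂ)
    (F₁ F₂ : Matrix (Fin Mx) (Fin q₁) ℂ)
    (F₃ : Matrix (Fin My) (Fin q₁) ℂ)
    (F₄ : Matrix (Fin Mz) (Fin q₁) ℂ)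
    (J₁ : Matrix (Fin Mx) (Fin q₂) ℂ)
    (J₂ : Matrix (Fin My) (Fin q₂) ℂ)
    (J₃ : Matrix (Fin Mz) (Fin q₂) ℂ)
    (P₁ : Matrix (Fin q₁) (Fin r₁) ℂ)
    (G : Matrix (Fin r₁) (Fin Mx) ℂ)
    (H : Matrix (Fin r₁) (Fin q₁) ℂ)
    (M : Matrix (Fin q₁) (Fin q₁) ℂ)
    (P₂ : Matrix (Fin q₂) (Fin r₂) ℂ)
    (K : Matrix (Fin r₂) (Fin Mv) ℂ)
    (S : Matrix (Fin r₂) (Fin q₂) ℂ)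
    (N : Matrix (Fin q₂) (Fin q₂) ℂ)
    (hwp₁ : IsUnit (M - P₁ * H)) (hwp₂ : IsUnit (N - P₂ * S))
    (W₁ : Matrix (Fin q₁) (Fin Mx) ℂ) (hW₁ : W₁ = (M - P₁ * H)⁻¹ * (P₁ * G))
    (W₂ : Matrix (Fin q₂) (Fin Mv) ℂ) (hW₂ : W₂ = (N - P₂ * S)⁻¹ * (P₂ * K))
    (E Axx : Matrix (Fin Mx) (Fin Mx) ℂ)
    (hE : E = E₀ + F₁ * W₁) (hAxx : Axx = Axx₀ + F₂ * W₁)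
    (Cx : Matrix (Fin My) (Fin Mx) ℂ) (hCx : Cx = Cx₀ + F₃ * W₁)
    (Azx : Matrix (Fin Mz) (Fin Mx) ℂ) (hAzx : Azx = Azx₀ + F₄ * W₁)
    (Axv : Matrix (Fin Mx) (Fin Mv) ℂ) (hAxv : Axv = Axv₀ + J₁ * W₂)
    (Cv : Matrix (Fin My) (Fin Mv) ℂ) (hCv : Cv = Cv₀ + J₂ * W₂)
    (Azv : Matrix (Fin Mz) (Fin Mv) ℂ) (hAzv : Azv = Azv₀ + J₃ * W₂)
    (lam : ℂ) :
    (Matrix.fromRows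
        (Matrix.fromBlocks (lam • E - Axx) (-Axv) (-Cx) (-Cv))
        (Matrix.fromCols (-(Φ * Azx)) ((1 : Matrix (Fin Mv) (Fin Mv) ℂ) - Φ * Azv))).rank
      = Mx + Mv ↔
    (Matrix.fromRows
      (Matrix.fromCols
        (Matrix.fromCols (lam • E₀ - Axx₀) (lam • F₁ - F₂))
        (Matrix.fromCols (-Axv₀) (-J₁)))
      (Matrix.fromRows
        (Matrix.fromCols
          (Matrix.fromCols (-Cx₀) (-F₃))
          (Matrix.fromCols (-Cv₀) (-J₂)))
        (Matrix.fromRows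
          (Matrix.fromCols
            (Matrix.fromCols (-(P₁ * G)) (M - P₁ * H))
            (Matrix.fromCols 0 0))
          (Matrix.fromRows
            (Matrix.fromCols
              (Matrix.fromCols 0 0)
              (Matrix.fromCols (-(P₂ * K)) (N - P₂ * S)))
            (Matrix.fromCols
              (Matrix.fromCols (-(Φ * Azx₀)) (-(Φ * F₄)))
              (Matrix.fromCols ((1 : Matrix (Fin Mv) (Fin Mv) ℂ) - Φ * Azv₀)
                (-(Φ * J₃)))))))).rank
      = Mx + q₁ + Mv + q₂ := by
  subst hW₁ hW₂ hE hAxx hCx hAzx hAxv hCv hAzv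
  have rank_eq := lft_observability_pencil_iff_general
    ⟨⟨E₀, Axx₀, Axv₀, Azx₀, Azv₀, Cx₀, Cv₀⟩, F₁, F₂, F₃, F₄, J₁, J₂, J₃, P₁, G, H, M, P₂, K, S, N⟩
    hwp₁ hwp₂ Φ lam
  simp only [GeneralizedLFT.affinePencil, DescriptorSystem.observabilityPencil,
    GeneralizedLFT.system, GeneralizedLFT.W₁, GeneralizedLFT.W₂, Fintype.card_fin] at rank_eq
  omega
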